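/- For all σ ∈ S_p and τ ∈ S_q, the set {x·(σ × τ) : x ∈ Sh(p,q)} equals the weak Bruhat order interval {ω ∈ S_{p+q} : σ/τ ≤ ω ≤ σ\τ}. Consequently, in the Malvenuto–Reutenauer algebra ℚ[S_∞], the product σ * τ equals the sum Σ ω over all permutations ω ∈ S_{p+q} with σ/τ ≤ ω ≤ σ\τ. -/

import Mathlib

/-! Symmetric groups `Sₙ` are modelled as `Equiv.Perm (Fin n)` (with `0`-indexed letters, so
the letter `i ∈ {1, …, n}` of the paper corresponds to `i - 1 : Fin n`), with the group law
`σ · τ = σ * τ` given by composition: `(σ * τ) x = σ (τ x)`. -/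

/-- `s` is a Coxeter generator `sᵢ`, i.e. the transposition of two consecutive letters. -/
def IsAdjacentTransposition {n : ℕ} (s : Equiv.Perm (Fin n)) : Prop :=
  ∃ (i : ℕ) (h : i + 1 < n), s = Equiv.swap ⟨i, by omega⟩ ⟨i + 1, h⟩

/-- The length `l(σ)`: the least `k` such that `σ` is a product of `k` Coxeter
generators `sᵢ`. -/
noncomputable def permLength {n : ℕ} (σ : Equiv.Perm (Fin n)) : ℕ :=
  sInf {k | ∃ L : List (Equiv.Perm (Fin n)),
    L.length = k ∧ (∀ s ∈ L, IsAdjacentTransposition s) ∧ L.prod = σ}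

/-- The weak Bruhat order on `Sₙ`: `ω ≤ σ` iff there is `τ` with `σ = τ · ω` and
`l(σ) = l(τ) + l(ω)`. -/
def weakLe {n : ℕ} (ω σ : Equiv.Perm (Fin n)) : Prop :=
  ∃ τ : Equiv.Perm (Fin n), σ = τ * ω ∧ permLength σ = permLength τ + permLength ω

/-- The strict weak Bruhat order. -/
def weakLt {n : ℕ} (ω σ : Equiv.Perm (Fin n)) : Prop :=
  weakLe ω σ ∧ ω ≠ σ

/-- `σ × τ`: the image of `(σ, τ)` under the canonical embedding
`S_p × S_q ↪ S_{p+q}`, where `σ` permutes the first `p` letters and `τ` the last `q`. -/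
def blockSum {p q : ℕ} (σ : Equiv.Perm (Fin p)) (τ : Equiv.Perm (Fin q)) :
    Equiv.Perm (Fin (p + q)) :=
  finSumFinEquiv.symm.trans ((Equiv.sumCongr σ τ).trans finSumFinEquiv)

/-- `ξ` is a `(p,q)`-shuffle: `ξ(1) < … < ξ(p)` and `ξ(p+1) < … < ξ(p+q)`. -/
def IsShuffle (p q : ℕ) (ξ : Equiv.Perm (Fin (p + q))) : Prop :=
  (∀ i j : Fin (p + q), (i : ℕ) < (j : ℕ) → (j : ℕ) < p → ξ i < ξ j) ∧
  (∀ i j : Fin (p + q), p ≤ (i : ℕ) → (i : ℕ) < (j : ℕ) → ξ i < ξ j)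

/-- `ξ_{p,q} ∈ S_{p+q}`: the permutation with one-line notation
`(q+1, q+2, …, q+p, 1, 2, …, q)`. -/
def xi (p q : ℕ) : Equiv.Perm (Fin (p + q)) :=
  finSumFinEquiv.symm.trans ((Equiv.sumComm (Fin p) (Fin q)).trans
    (finSumFinEquiv.trans (finCongr (Nat.add_comm q p))))

/-- Transport of a permutation along an equality of the number of letters. -/
def permCast {m n : ℕ} (h : m = n) (π : Equiv.Perm (Fin m)) : Equiv.Perm (Fin n) :=
  (finCongr h).permCongr π

/-- The grafting `σ ∨ τ ∈ S_{p+q+1}` of `σ ∈ S_p` and `τ ∈ S_q`: in 1-indexed one-line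
notation, `(σ∨τ)(i) = σ(i)` for `1 ≤ i ≤ p`, `(σ∨τ)(p+1) = p+q+1`, and
`(σ∨τ)(i) = τ(i-p-1) + p` for `p+2 ≤ i ≤ p+q+1`.  (Equivalently,
`σ ∨ τ = (σ × τ × 1₁) · s_{p+q} · s_{p+q-1} · ⋯ · s_{p+1}`.) -/
def graft {p q : ℕ} (σ : Equiv.Perm (Fin p)) (τ : Equiv.Perm (Fin q)) :
    Equiv.Perm (Fin (p + q + 1)) :=
  blockSum (blockSum σ τ) (1 : Equiv.Perm (Fin 1)) *
    permCast (by omega) (blockSum (1 : Equiv.Perm (Fin p)) (finRotate (q + 1))⁻¹)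

/-- The `over` operation on permutations: `σ / τ := σ × τ`. -/
def overP {p q : ℕ} (σ : Equiv.Perm (Fin p)) (τ : Equiv.Perm (Fin q)) :
    Equiv.Perm (Fin (p + q)) :=
  blockSum σ τ

/-- The `under` operation on permutations: `σ \ τ := ξ_{p,q} · (σ × τ)`. -/
def underP {p q : ℕ} (σ : Equiv.Perm (Fin p)) (τ : Equiv.Perm (Fin q)) :
    Equiv.Perm (Fin (p + q)) :=
  xi p q * blockSum σ τ

open Classical in
noncomputable def NN {n : ℕ} (σ : Equiv.Perm (Fin n)) : Finset (Fin n × Fin n) :=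
  Finset.univ.filter (fun x => ¬ (x.1 < x.2 ↔ σ x.1 < σ x.2))

open Classical in
noncomputable def DD {n : ℕ} (τ ω : Equiv.Perm (Fin n)) : Finset (Fin n × Fin n) :=
  Finset.univ.filter (fun x => ¬ (ω x.1 < ω x.2 ↔ τ (ω x.1) < τ (ω x.2)))

theorem mem_NN {n : ℕ} (σ : Equiv.Perm (Fin n)) (x : Fin n × Fin n) :
    x ∈ NN σ ↔ ¬ (x.1 < x.2 ↔ σ x.1 < σ x.2) := by simp [NN]

theorem mem_DD {n : ℕ} (τ ω : Equiv.Perm (Fin n)) (x : Fin n × Fin n) :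
    x ∈ DD τ ω ↔ ¬ (ω x.1 < ω x.2 ↔ τ (ω x.1) < τ (ω x.2)) := by simp [DD]

theorem card_DD {n : ℕ} (τ ω : Equiv.Perm (Fin n)) : (DD τ ω).card = (NN τ).card := by
  refine Finset.card_equiv (Equiv.prodCongr ω ω) ?_
  intro x
  simp [mem_NN, mem_DD]

theorem mem_NN_mul {n : ℕ} (τ ω : Equiv.Perm (Fin n)) (x : Fin n × Fin n) :
    x ∈ NN (τ * ω) ↔ ¬ (x ∈ NN ω ↔ x ∈ DD τ ω) := by
  rw [mem_NN, mem_NN, mem_DD, Equiv.Perm.mul_apply, Equiv.Perm.mul_apply]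
  tauto

theorem card_NN_mul {n : ℕ} (τ ω : Equiv.Perm (Fin n)) :
    (NN (τ * ω)).card + 2 * (NN ω ∩ DD τ ω).card = (NN τ).card + (NN ω).card := by
  rw [← card_DD τ ω]
  have h1 : NN (τ * ω) = (NN ω \ DD τ ω) ∪ (DD τ ω \ NN ω) := by
    ext x
    rw [mem_NN_mul]
    simp only [Finset.mem_union, Finset.mem_sdiff]
    tauto
  have h2 : Disjoint (NN ω \ DD τ ω) (DD τ ω \ NN ω) := by
    rw [Finset.disjoint_left]
    intro x
    simp only [Finset.mem_sdiff]
    tauto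
  rw [h1, Finset.card_union_of_disjoint h2]
  have h3 := Finset.card_sdiff_add_card_inter (NN ω) (DD τ ω)
  have h4 := Finset.card_sdiff_add_card_inter (DD τ ω) (NN ω)
  rw [Finset.inter_comm] at h4
  omega

theorem NN_one {n : ℕ} : NN (1 : Equiv.Perm (Fin n)) = ∅ := by
  ext x; simp [mem_NN]

theorem NN_swap {n i : ℕ} (h : i + 1 < n) :
    NN (Equiv.swap (⟨i, by omega⟩ : Fin n) ⟨i + 1, h⟩) =
      {(⟨i, by omega⟩, ⟨i + 1, h⟩), (⟨i + 1, h⟩, ⟨i, by omega⟩)} := by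
  ext ⟨⟨a, ha⟩, ⟨b, hb⟩⟩
  rw [mem_NN]
  simp only [Equiv.swap_apply_def, Finset.mem_insert, Finset.mem_singleton, Prod.mk.injEq,
    Fin.mk.injEq, Fin.lt_def]
  split_ifs <;> simp <;> omega

theorem card_NN_swap {n i : ℕ} (h : i + 1 < n) :
    (NN (Equiv.swap (⟨i, by omega⟩ : Fin n) ⟨i + 1, h⟩)).card = 2 := by
  rw [NN_swap, Finset.card_pair]
  simp

theorem card_NN_list {n : ℕ} (L : List (Equiv.Perm (Fin n)))
    (hL : ∀ s ∈ L, IsAdjacentTransposition s) : (NN L.prod).card ≤ 2 * L.length := by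
  induction L with
  | nil => simp [NN_one]
  | cons s L ih =>
    have h1 := ih (fun t ht => hL t (by simp [ht]))
    obtain ⟨i, h, rfl⟩ := hL s (by simp)
    have h2 := card_NN_mul (Equiv.swap (⟨i, by omega⟩ : Fin n) ⟨i + 1, h⟩) L.prod
    rw [card_NN_swap h] at h2
    rw [List.prod_cons, List.length_cons]
    omega

theorem exists_descent {n : ℕ} (σ : Equiv.Perm (Fin n)) (hσ : σ ≠ 1) :
    ∃ (i : ℕ) (h : i + 1 < n), σ ⟨i + 1, h⟩ < σ ⟨i, by omega⟩ := by
  by_contra! hc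
  apply hσ
  cases n with
  | zero => exact Subsingleton.elim _ _
  | succ m =>
    have hm : StrictMono σ := by
      rw [Fin.strictMono_iff_lt_succ]
      intro i
      refine lt_of_le_of_ne (hc i.1 (by omega)) ?_
      intro he
      have := σ.injective he
      simp [Fin.ext_iff] at this
    ext x
    have := congrFun (StrictMono.range_inj hm strictMono_id |>.1 (by simp)) x
    simp [this]

theorem exists_word {n : ℕ} (k : ℕ) : ∀ σ : Equiv.Perm (Fin n), (NN σ).card ≤ k →
    ∃ L : List (Equiv.Perm (Fin n)),
      2 * L.length = (NN σ).card ∧ (∀ s ∈ L, IsAdjacentTransposition s) ∧ L.prod = σ := by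
  induction k using Nat.strong_induction_on with
  | _ k ih =>
  intro σ hk
  by_cases hσ : σ = 1
  · subst hσ
    exact ⟨[], by simp [NN_one]⟩
  obtain ⟨i, h, hd⟩ := exists_descent σ hσ
  set s : Equiv.Perm (Fin n) := Equiv.swap ⟨i, by omega⟩ ⟨i + 1, h⟩ with hs
  have h1 := card_NN_mul σ s
  have h3 : NN s ∩ DD σ s = NN s := by
    rw [Finset.inter_eq_left]
    intro x hx
    rw [hs, NN_swap h] at hx
    simp only [Finset.mem_insert, Finset.mem_singleton] at hx
    rw [mem_DD]
    rcases hx with rfl | rfl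
    · simp only [hs, Equiv.swap_apply_left, Equiv.swap_apply_right]
      simp only [Fin.lt_def] at hd ⊢
      omega
    · simp only [hs, Equiv.swap_apply_left, Equiv.swap_apply_right]
      simp only [Fin.lt_def] at hd ⊢
      omega
  rw [h3, hs, card_NN_swap h, ← hs] at h1
  obtain ⟨L, hL1, hL2, hL3⟩ := ih ((NN (σ * s)).card) (by omega) (σ * s) le_rfl
  refine ⟨L ++ [s], ?_, ?_, ?_⟩
  · simp
    omega
  · intro t ht
    rw [List.mem_append, List.mem_singleton] at ht
    rcases ht with ht | rfl
    · exact hL2 t ht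
    · exact ⟨i, h, hs⟩
  · simp [hL3, mul_assoc, hs]

theorem two_permLength {n : ℕ} (σ : Equiv.Perm (Fin n)) :
    2 * permLength σ = (NN σ).card := by
  obtain ⟨L, hL1, hL2, hL3⟩ := exists_word _ σ le_rfl
  have hmem : L.length ∈ {k | ∃ L : List (Equiv.Perm (Fin n)),
    L.length = k ∧ (∀ s ∈ L, IsAdjacentTransposition s) ∧ L.prod = σ} := ⟨L, rfl, hL2, hL3⟩
  have h1 : permLength σ ≤ L.length := Nat.sInf_le hmem
  obtain ⟨L', h2, h3, h4⟩ := Nat.sInf_mem ⟨_, hmem⟩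
  have h5 := card_NN_list L' h3
  rw [h4, h2] at h5
  change _ ≤ 2 * permLength σ at h5
  omega

theorem weakLe_iff {n : ℕ} (ω σ : Equiv.Perm (Fin n)) : weakLe ω σ ↔ NN ω ⊆ NN σ := by
  have key : ∀ τ : Equiv.Perm (Fin n), (permLength (τ * ω) = permLength τ + permLength ω ↔
      NN ω ⊆ NN (τ * ω)) := by
    intro τ
    have h1 := card_NN_mul τ ω
    rw [← two_permLength, ← two_permLength, ← two_permLength] at h1
    have h2 : permLength (τ * ω) = permLength τ + permLength ω ↔ NN ω ∩ DD τ ω = ∅ := by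
      rw [← Finset.card_eq_zero]
      omega
    rw [h2, Finset.eq_empty_iff_forall_notMem]
    constructor
    · intro h x hx
      have := h x
      rw [Finset.mem_inter] at this
      rw [mem_NN_mul]
      tauto
    · intro h x hx
      rw [Finset.mem_inter] at hx
      have := h hx.1
      rw [mem_NN_mul] at this
      tauto
  constructor
  · rintro ⟨τ, rfl, h⟩
    exact (key τ).1 h
  · intro h
    refine ⟨σ * ω⁻¹, by simp, ?_⟩
    have := (key (σ * ω⁻¹)).2 (by simpa using h)
    simpa using this

theorem NN_subset_iff {n : ℕ} (ω σ : Equiv.Perm (Fin n)) :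
    NN ω ⊆ NN σ ↔ ∀ i j : Fin n, i < j → ω j < ω i → σ j < σ i := by
  have hne : ∀ (π : Equiv.Perm (Fin n)) (i j : Fin n), i < j → (¬ π i < π j ↔ π j < π i) := by
    intro π i j hij
    have : π i ≠ π j := fun h => hij.ne (π.injective h)
    rw [not_lt]
    exact ⟨fun h => lt_of_le_of_ne h this.symm, le_of_lt⟩
  constructor
  · intro h i j hij hw
    have := @h (i, j) (by rw [mem_NN]; simp [hij, hw.le])
    rw [mem_NN] at this
    simp only [hij, true_iff] at this
    exact (hne σ i j hij).1 this
  · rintro h ⟨i, j⟩ hx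
    rw [mem_NN] at hx ⊢
    rcases lt_trichotomy i j with hij | rfl | hij
    · have := h i j hij
      have h1 := hne ω i j hij
      have h2 := hne σ i j hij
      simp only at hx ⊢
      tauto
    · simp at hx
    · have := h j i hij
      have h1 := hij.not_gt
      simp only [h1, false_iff, not_not] at hx ⊢
      exact this hx

theorem blockSum_lt {p q : ℕ} (σ : Equiv.Perm (Fin p)) (τ : Equiv.Perm (Fin q))
    (i : Fin (p + q)) : ((blockSum σ τ i : Fin (p + q)) : ℕ) < p ↔ (i : ℕ) < p := by
  induction i using Fin.addCases with
  | left i => simp [blockSum]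
  | right i => simp [blockSum]

theorem xi_apply (p q : ℕ) (i : Fin (p + q)) :
    ((xi p q i : Fin (p + q)) : ℕ) = if (i : ℕ) < p then (i : ℕ) + q else i - p := by
  induction i using Fin.addCases with
  | left i => simp [xi, add_comm]
  | right i => simp [xi]

theorem shuffle_iff {p q : ℕ} (σ : Equiv.Perm (Fin p)) (τ : Equiv.Perm (Fin q))
    (x : Equiv.Perm (Fin (p + q))) :
    IsShuffle p q x ↔ weakLe (overP σ τ) (x * blockSum σ τ) ∧
      weakLe (x * blockSum σ τ) (underP σ τ) := by
  rw [weakLe_iff, weakLe_iff, NN_subset_iff, NN_subset_iff, overP, underP]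
  set β := blockSum σ τ with hβ
  have hb : ∀ i, ((β i : Fin (p + q)) : ℕ) < p ↔ (i : ℕ) < p := blockSum_lt σ τ
  simp only [Equiv.Perm.mul_apply]
  constructor
  · rintro ⟨s1, s2⟩
    constructor
    · intro i j hij hw
      have h1 := hb i
      have h2 := hb j
      by_cases hi : ((β i : Fin (p + q)) : ℕ) < p
      · exact s1 _ _ hw hi
      · exact s2 _ _ (by simp only [Fin.lt_def] at hij; omega) hw
    · intro i j hij hw
      have h1 := hb i
      have h2 := hb j
      have s1' := s1 (β i) (β j)
      have s2' := s2 (β i) (β j)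
      have hne : (β i : ℕ) ≠ (β j : ℕ) := fun h => hij.ne (β.injective (Fin.ext h))
      simp only [Fin.lt_def, xi_apply] at *
      split_ifs <;> omega
  · rintro ⟨w1, w2⟩
    have gen : ∀ a b : Fin (p + q), (a : ℕ) < b → ((a : ℕ) < p ↔ (b : ℕ) < p) → x a < x b := by
      intro a b hab hp
      obtain ⟨i, rfl⟩ := β.surjective a
      obtain ⟨j, rfl⟩ := β.surjective b
      rcases lt_trichotomy i j with hij | rfl | hij
      · by_contra hc
        have hne : x (β i) ≠ x (β j) := fun h => hij.ne (β.injective (x.injective h))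
        have := w2 i j hij (lt_of_le_of_ne (not_lt.1 hc) hne.symm)
        simp only [Fin.lt_def, xi_apply] at this
        split_ifs at this <;> omega
      · omega
      · exact w1 j i hij hab
    exact ⟨fun i j h1 h2 => gen i j h1 (by omega), fun i j h1 h2 => gen i j h2 (by omega)⟩

attribute [local instance] Classical.propDecidable

/-- Theorem 4.1: for `σ ∈ S_p`, `τ ∈ S_q`, the set
`{x · (σ × τ) : x ∈ Sh(p,q)}` equals the weak Bruhat interval
`{ω ∈ S_{p+q} : σ/τ ≤ ω ≤ σ\τ}`; consequently, in the Malvenuto–Reutenauer algebra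
`ℚ[S_∞]` (whose degree `p+q` component is `ℚ[S_{p+q}] = Perm (Fin (p+q)) →₀ ℚ`), the
product `σ * τ = Σ_{x ∈ Sh(p,q)} x · (σ × τ)` equals `Σ_{σ/τ ≤ ω ≤ σ\τ} ω`. -/
theorem stmt8 (p q : ℕ) (σ : Equiv.Perm (Fin p)) (τ : Equiv.Perm (Fin q)) :
    ((Finset.univ.filter (IsShuffle p q)).image (fun x => x * blockSum σ τ) =
      Finset.univ.filter (fun ω => weakLe (overP σ τ) ω ∧ weakLe ω (underP σ τ))) ∧
    (∑ x ∈ Finset.univ.filter (IsShuffle p q),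
        Finsupp.single (x * blockSum σ τ) (1 : ℚ) =
      ∑ ω ∈ Finset.univ.filter (fun ω => weakLe (overP σ τ) ω ∧ weakLe ω (underP σ τ)),
        Finsupp.single ω (1 : ℚ)) := by
  have hset : (Finset.univ.filter (IsShuffle p q)).image (fun x => x * blockSum σ τ) =
      Finset.univ.filter
        (fun ω => weakLe (overP σ τ) ω ∧ weakLe ω (underP σ τ)) := by
    ext ω
    simp only [Finset.mem_image, Finset.mem_filter, Finset.mem_univ, true_and]
    constructor
    · rintro ⟨x, hx, rfl⟩
      exact (shuffle_iff σ τ x).1 hx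
    · intro h
      refine ⟨ω * (blockSum σ τ)⁻¹, (shuffle_iff σ τ _).2 ?_, by simp⟩
      simpa using h
  refine ⟨hset, ?_⟩
  rw [← hset, Finset.sum_image]
  intro a _ b _ h
  exact mul_right_cancel h
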